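/- arXiv:1703.06598 — 2 statements merged into one kernel-verified Lean document; each statement's English description precedes it below -/
import Mathlib

section
/- Let (M, ρ_M) be a metric space, α ∈ (0,1), C ≥ 0, n ∈ ℕ, d ≥ 1, and let D_m = {(k₁,…,k_d)·2^{−m} : k₁,…,k_d ∈ {1,…,2^m}} denote the dyadic grid of level m in [0,1]^d. Let X : [0,1]^d → M be a function such that for every m ≥ n and every pair of points u, v ∈ D_m with |u − v| = 2^{−m} one has ρ_M(X(u), X(v)) ≤ C·2^{−αm}. Then there exists a constant C′ depending only on C, α and d (and not on n or X) such that for every m ≥ n and all u, v ∈ D_m with |u − v| ≤ 2^{−n}, ρ_M(X(u), X(v)) ≤ C′·|u − v|^α. -/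
/-!
The proof is the usual chaining argument, run on integer coordinates. A point of the level-`m`
grid is `gridPoint d m k` with `k : Fin d → ℕ`, and `r = 2 ^ (-α)`, so that the hypothesis bounds
the increment over a level-`m` edge by `C * r ^ m`.

Changing one coordinate at a time, `dist_le_of_adjacent` bounds the increment between two grid
points whose coordinates all differ by at most one by `d * C * r ^ m`. Rounding `k` up to
`(k + 1) / 2` sends a level-`(m + 1)` point to such a neighbour lying in the level-`m` grid (rounding
up keeps the indices in `{1, …, 2 ^ m}`), and halves index distances bounded by a power of two.
Iterating from level `p + j` down to level `p` gives `chain_bound`, a geometric sum of size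
`O(r ^ p)` for points whose indices differ by at most `2 ^ j`. Finally `p` is chosen with
`2 ^ (-(p + 1)) < |u - v| ≤ 2 ^ (-p)`.
-/

/-- The dyadic grid of level `m` in `[0,1]^d`:
points `(k₁, …, k_d) 2^(-m)` with `k₁, …, k_d ∈ {1, …, 2^m}`. -/
def dyadicGrid (d m : ℕ) : Set (EuclideanSpace ℝ (Fin d)) :=
  {u | ∀ i, ∃ k : ℕ, 1 ≤ k ∧ k ≤ 2 ^ m ∧ u i = (k : ℝ) / 2 ^ m}

/-- The point `(k₁, …, k_d) 2^(-m)`. -/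
noncomputable def gridPoint (d m : ℕ) (k : Fin d → ℕ) : EuclideanSpace ℝ (Fin d) :=
  WithLp.toLp 2 (fun i => (k i : ℝ) / 2 ^ m)

lemma gridPoint_mem {d m : ℕ} {k : Fin d → ℕ} (hk : ∀ i, 1 ≤ k i ∧ k i ≤ 2 ^ m) :
    gridPoint d m k ∈ dyadicGrid d m :=
  fun i => ⟨k i, (hk i).1, (hk i).2, rfl⟩

lemma exists_gridPoint {d m : ℕ} {u : EuclideanSpace ℝ (Fin d)} (hu : u ∈ dyadicGrid d m) :
    ∃ k : Fin d → ℕ, (∀ i, 1 ≤ k i ∧ k i ≤ 2 ^ m) ∧ u = gridPoint d m k := by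
  choose k h1 h2 h3 using hu
  refine ⟨k, fun i => ⟨h1 i, h2 i⟩, ?_⟩
  ext i
  exact h3 i

lemma gridPoint_succ_double (d m : ℕ) (k : Fin d → ℕ) :
    gridPoint d (m + 1) (fun i => 2 * k i) = gridPoint d m k := by
  ext i
  simp only [gridPoint]
  push_cast
  rw [pow_succ]
  field_simp

lemma dist_gridPoint_of_eq_off {d m : ℕ} {k l : Fin d → ℕ} (a : Fin d)
    (h : ∀ i, i ≠ a → k i = l i) (ha : |(k a : ℝ) - l a| = 1) :
    dist (gridPoint d m k) (gridPoint d m l) = (1 / 2 : ℝ) ^ m := by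
  rw [EuclideanSpace.dist_eq, Finset.sum_eq_single a]
  · rw [Real.sqrt_sq dist_nonneg, Real.dist_eq]
    simp only [gridPoint]
    rw [← sub_div, abs_div, ha, abs_of_pos (by positivity : (0 : ℝ) < 2 ^ m), one_div_pow]
  · intro i _ hi
    simp [gridPoint, h i hi]
  · simp

/-- The increment between grid points whose coordinates all differ by at most one, by passing
through the points that agree with `l` on a growing set of coordinates and with `k` elsewhere. -/
lemma dist_le_of_adjacent {d m : ℕ} {M : Type*} [MetricSpace M]
    {X : EuclideanSpace ℝ (Fin d) → M} {B : ℝ} (hB : 0 ≤ B)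
    (hX : ∀ u ∈ dyadicGrid d m, ∀ v ∈ dyadicGrid d m,
      dist u v = (1 / 2 : ℝ) ^ m → dist (X u) (X v) ≤ B)
    {k l : Fin d → ℕ} (hk : ∀ i, 1 ≤ k i ∧ k i ≤ 2 ^ m) (hl : ∀ i, 1 ≤ l i ∧ l i ≤ 2 ^ m)
    (hkl : ∀ i, k i ≤ l i + 1 ∧ l i ≤ k i + 1) :
    dist (X (gridPoint d m k)) (X (gridPoint d m l)) ≤ d * B := by
  have key : ∀ s : Finset (Fin d),
      dist (X (gridPoint d m k)) (X (gridPoint d m (s.piecewise l k))) ≤ s.card * B := by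
    intro s
    induction s using Finset.induction_on with
    | empty => simp
    | insert a s has ih =>
      have hmem : ∀ t : Finset (Fin d), gridPoint d m (t.piecewise l k) ∈ dyadicGrid d m := by
        intro t
        apply gridPoint_mem
        intro i
        by_cases hi : i ∈ t
        · simpa [hi] using hl i
        · simpa [hi] using hk i
      have hstep : dist (X (gridPoint d m (s.piecewise l k)))
          (X (gridPoint d m ((insert a s).piecewise l k))) ≤ B := by
        rw [Finset.piecewise_insert]
        by_cases hka : k a = l a
        · have : Function.update (s.piecewise l k) a (l a) = s.piecewise l k := by
            rw [Function.update_eq_self_iff]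
            simp [has, hka]
          rw [this, dist_self]
          exact hB
        · have h2 := hmem (insert a s)
          rw [Finset.piecewise_insert] at h2
          refine hX _ (hmem s) _ h2 (dist_gridPoint_of_eq_off a ?_ ?_)
          · intro i hi
            simp [Function.update_of_ne hi]
          · have h := hkl a
            simp only [Finset.piecewise_eq_of_notMem _ _ _ has, Function.update_self]
            rcases (by omega : k a = l a + 1 ∨ l a = k a + 1) with h | h <;> rw [h] <;> simp
      have htri := dist_triangle (X (gridPoint d m k)) (X (gridPoint d m (s.piecewise l k)))
          (X (gridPoint d m ((insert a s).piecewise l k)))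
      rw [Finset.card_insert_of_notMem has]
      push_cast
      linarith
  simpa using key Finset.univ

/-- Points of level `p + j` at index distance at most `2 ^ j`, i.e. at sup distance at most
`2 ^ (-p)`: each of the `j` roundings costs one adjacent move at either end. -/
lemma chain_bound {d n : ℕ} {M : Type*} [MetricSpace M]
    {X : EuclideanSpace ℝ (Fin d) → M} {C r : ℝ} (hC : 0 ≤ C) (hr : 0 ≤ r)
    (hX : ∀ m, n ≤ m → ∀ u ∈ dyadicGrid d m, ∀ v ∈ dyadicGrid d m,
      dist u v = (1 / 2 : ℝ) ^ m → dist (X u) (X v) ≤ C * r ^ m)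
    (p : ℕ) (hp : n ≤ p) (j : ℕ) : ∀ (k l : Fin d → ℕ),
    (∀ i, 1 ≤ k i ∧ k i ≤ 2 ^ (p + j)) → (∀ i, 1 ≤ l i ∧ l i ≤ 2 ^ (p + j)) →
    (∀ i, k i ≤ l i + 2 ^ j ∧ l i ≤ k i + 2 ^ j) →
    dist (X (gridPoint d (p + j) k)) (X (gridPoint d (p + j) l)) ≤
      2 * d * C * r ^ p * ∑ i ∈ Finset.range (j + 1), r ^ i := by
  induction j with
  | zero =>
    intro k l hk hl hkl
    have h := dist_le_of_adjacent (by positivity) (hX p hp) hk hl (by simpa using hkl)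
    have h0 : 0 ≤ d * (C * r ^ p) := by positivity
    simp only [add_zero, zero_add, Finset.range_one, Finset.sum_singleton, pow_zero, mul_one]
    linarith
  | succ j ih =>
    intro k l hk hl hkl
    have hpow : 2 ^ (p + (j + 1)) = 2 * 2 ^ (p + j) := by rw [← add_assoc, pow_succ, mul_comm]
    have hpow' : 2 ^ (j + 1) = 2 * 2 ^ j := by rw [pow_succ, mul_comm]
    have hround : ∀ k : Fin d → ℕ, (∀ i, 1 ≤ k i ∧ k i ≤ 2 ^ (p + (j + 1))) →
        (∀ i, 1 ≤ (k i + 1) / 2 ∧ (k i + 1) / 2 ≤ 2 ^ (p + j)) ∧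
        dist (X (gridPoint d (p + (j + 1)) k))
          (X (gridPoint d (p + j) (fun i => (k i + 1) / 2))) ≤ d * (C * r ^ (p + (j + 1))) := by
      intro k hk
      rw [hpow] at hk
      refine ⟨fun i => by have := hk i; omega, ?_⟩
      rw [← gridPoint_succ_double d (p + j)]
      refine dist_le_of_adjacent (by positivity) (hX (p + (j + 1)) (by omega))
        (by rw [hpow]; exact hk) (fun i => ?_) (fun i => ?_)
      · have := hk i
        rw [hpow]
        omega
      · omega
    obtain ⟨hk1, hk2⟩ := hround k hk
    obtain ⟨hl1, hl2⟩ := hround l hl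
    have hmid := ih _ _ hk1 hl1 (fun i => by have := hkl i; rw [hpow'] at this; omega)
    rw [dist_comm] at hl2
    have htri := dist_triangle4 (X (gridPoint d (p + (j + 1)) k))
      (X (gridPoint d (p + j) (fun i => (k i + 1) / 2)))
      (X (gridPoint d (p + j) (fun i => (l i + 1) / 2)))
      (X (gridPoint d (p + (j + 1)) l))
    rw [Finset.sum_range_succ, mul_add]
    have hsplit : 2 * d * C * r ^ p * r ^ (j + 1) = 2 * (d * (C * r ^ (p + (j + 1)))) := by
      rw [pow_add r p]; ring
    linarith

lemma abs_index_sub_le_dist {d m : ℕ} (k l : Fin d → ℕ) (i : Fin d) :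
    |(k i : ℝ) - l i| ≤ 2 ^ m * dist (gridPoint d m k) (gridPoint d m l) := by
  have h := PiLp.norm_apply_le (gridPoint d m k - gridPoint d m l) i
  rw [← dist_eq_norm] at h
  have h2 : (gridPoint d m k - gridPoint d m l) i = ((k i : ℝ) - l i) / 2 ^ m := by
    simp [gridPoint, sub_div]
  rw [h2, Real.norm_eq_abs, abs_div, abs_of_pos (by positivity : (0 : ℝ) < 2 ^ m),
    div_le_iff₀ (by positivity)] at h
  linarith

/-- **Dyadic chaining.** If a function `X` on `[0,1]^d` satisfies
`ρ(X u, X v) ≤ C 2^(-αm)` for all neighbouring points `u, v` (at distance `2^(-m)`) of every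
dyadic grid of level `m ≥ n`, then there is a constant `C'` depending only on `C`, `α` and `d`
(and not on `n` or `X`) such that `ρ(X u, X v) ≤ C' |u - v|^α` for all `m ≥ n` and all
`u, v` in the level-`m` grid with `|u - v| ≤ 2^(-n)`. -/
theorem dyadic_chaining
    (d : ℕ) (hd : 1 ≤ d) (α C : ℝ) (hα : α ∈ Set.Ioo (0 : ℝ) 1) (hC : 0 ≤ C)
    {M : Type*} [MetricSpace M] :
    ∃ C' : ℝ, ∀ (n : ℕ) (X : EuclideanSpace ℝ (Fin d) → M),
      (∀ m : ℕ, n ≤ m → ∀ u ∈ dyadicGrid d m, ∀ v ∈ dyadicGrid d m,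
        dist u v = 2 ^ (-(m : ℝ)) → dist (X u) (X v) ≤ C * 2 ^ (-α * m)) →
      ∀ m : ℕ, n ≤ m → ∀ u ∈ dyadicGrid d m, ∀ v ∈ dyadicGrid d m,
        dist u v ≤ 2 ^ (-(n : ℝ)) → dist (X u) (X v) ≤ C' * dist u v ^ α := by
  obtain ⟨hα0, -⟩ := hα
  set r : ℝ := 2 ^ (-α) with hr
  have hr0 : 0 < r := by positivity
  have hr1 : r < 1 := Real.rpow_lt_one_of_one_lt_of_neg (by norm_num) (by linarith)
  have hrpow : ∀ m : ℕ, (2 : ℝ) ^ (-α * m) = r ^ m := fun m => by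
    rw [hr, Real.rpow_mul (by norm_num), Real.rpow_natCast]
  have hhalf : ∀ m : ℕ, (2 : ℝ) ^ (-(m : ℝ)) = (1 / 2) ^ m := fun m => by
    rw [Real.rpow_neg (by norm_num), Real.rpow_natCast, one_div, inv_pow]
  refine ⟨2 * d * C * (1 - r)⁻¹ / r, ?_⟩
  intro n X hX m hm u hu v hv huv
  simp only [hrpow, hhalf] at hX huv
  obtain ⟨k, hk, rfl⟩ := exists_gridPoint hu
  obtain ⟨l, hl, rfl⟩ := exists_gridPoint hv
  by_cases hne : k = l
  · subst hne
    simp [Real.zero_rpow hα0.ne']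
  set δ := dist (gridPoint d m k) (gridPoint d m l) with hδ
  have hcoord := abs_index_sub_le_dist (m := m) k l
  rw [← hδ] at hcoord
  -- Distinct points of the level-`m` grid are at distance at least `2 ^ (-m)`.
  have hlow : (1 / 2 : ℝ) ^ m ≤ δ := by
    obtain ⟨i, hi⟩ := Function.ne_iff.mp hne
    have h1 : (1 : ℝ) ≤ |(k i : ℝ) - l i| := by
      have : (1 : ℤ) ≤ |(k i : ℤ) - l i| := Int.one_le_abs (by omega)
      exact_mod_cast this
    have h2 := h1.trans (hcoord i)
    rw [one_div_pow, div_le_iff₀ (by positivity)]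
    linarith
  have hδ0 : 0 < δ := lt_of_lt_of_le (by positivity) hlow
  obtain ⟨p, hp1, hp2⟩ := exists_nat_pow_near_of_lt_one hδ0
    (huv.trans (pow_le_one₀ (by norm_num) (by norm_num))) (by norm_num : (0 : ℝ) < 1 / 2)
    (by norm_num)
  have hnp : n ≤ p := by
    have := (pow_lt_pow_iff_right_of_lt_one₀ (by norm_num : (0 : ℝ) < 1 / 2) (by norm_num)).mp
      (hp1.trans_le huv)
    omega
  have hpm : p ≤ m :=
    (pow_le_pow_iff_right_of_lt_one₀ (by norm_num : (0 : ℝ) < 1 / 2) (by norm_num)).mp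
      (hlow.trans hp2)
  obtain ⟨j, rfl⟩ := Nat.exists_eq_add_of_le hpm
  have hidx : ∀ i, k i ≤ l i + 2 ^ j ∧ l i ≤ k i + 2 ^ j := by
    intro i
    have h : |(k i : ℝ) - l i| ≤ 2 ^ j := by
      calc |(k i : ℝ) - l i| ≤ 2 ^ (p + j) * δ := hcoord i
        _ ≤ 2 ^ (p + j) * (1 / 2) ^ p := by gcongr
        _ = 2 ^ j := by rw [one_div_pow, pow_add]; field_simp
    rw [abs_le] at h
    constructor
    · have : (k i : ℝ) ≤ l i + 2 ^ j := by linarith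
      exact_mod_cast this
    · have : (l i : ℝ) ≤ k i + 2 ^ j := by linarith
      exact_mod_cast this
  have hchain := chain_bound hC hr0.le hX p hnp j k l hk hl hidx
  have hgeom : ∑ i ∈ Finset.range (j + 1), r ^ i ≤ (1 - r)⁻¹ := by
    rw [← tsum_geometric_of_lt_one hr0.le hr1]
    exact (summable_geometric_of_lt_one hr0.le hr1).sum_le_tsum _ (fun i _ => by positivity)
  have hpowδ : r ^ (p + 1) ≤ δ ^ α := by
    rw [← hrpow, neg_mul, mul_comm, ← neg_mul, Real.rpow_mul (by norm_num), hhalf]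
    exact Real.rpow_le_rpow (by positivity) hp1.le hα0.le
  have h1r : 0 < 1 - r := by linarith
  calc _ ≤ 2 * d * C * r ^ p * ∑ i ∈ Finset.range (j + 1), r ^ i := hchain
    _ ≤ 2 * d * C * r ^ p * (1 - r)⁻¹ := by gcongr
    _ = 2 * d * C * (1 - r)⁻¹ / r * r ^ (p + 1) := by rw [pow_succ]; field_simp
    _ ≤ 2 * d * C * (1 - r)⁻¹ / r * δ ^ α := by gcongr
end

section
/- Let T > 0, x ∈ ℝ^d, α ∈ (0,1), γ > 0 with α(1+γ) > 1, and let C₁, C₂ ≥ 0. Let φ_{s,t} : ℝ^d → ℝ^d, defined for 0 ≤ s ≤ t ≤ T, be a family of maps satisfying the flow property φ_{s,t} = φ_{u,t} ∘ φ_{s,u} for all 0 ≤ s ≤ u ≤ t ≤ T, with φ_{s,s} = id, such that t ↦ φ_{0,t}(x) is continuous. Let Y : [0,T] → ℝ^d be continuous with Y_0 = x. Assume there is K ∈ ℕ such that for every integer k ≥ K: (i) for all consecutive dyadic points u = i/2^k, r = (i+1)/2^k in [0,T], |Y_r − φ_{u,r}(Y_u)| ≤ C₁·2^{−k(1+γ)}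 and this quantity is ≤ 2^{−k}; and (ii) for every dyadic point r = (i+1)/2^k ∈ [0,T], every t ∈ [r,T], and all z, w ∈ ℝ^d with |z − w| ≤ 2^{−k}, |φ_{r,t}(z) − φ_{r,t}(w)| ≤ C₂·|z − w|^α. Then Y_t = φ_{0,t}(x) for all t ∈ [0,T]. -/
/-!
Fix a level `k ≥ K` and a dyadic point `t = n/2^k ≤ T`. The sequence
`a i = φ_{i/2^k, t}(Y_{i/2^k})`, `i = 0, …, n`, interpolates between `φ_{0,t}(x)` and `Y_t`. By the
flow property `a i = φ_{r,t}(φ_{u,r}(Y_u))` with `u = i/2^k`, `r = (i+1)/2^k`, so the Hölder bound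
turns the local error into `|a (i+1) - a i| ≤ C₂ (C₁ 2^(-k(1+γ)))^α`. Summing at most `T 2^k` such
terms gives `|Y_t - φ_{0,t}(x)| ≤ T C₂ C₁^α (2^(1 - α(1+γ)))^k`, which tends to `0` as `k → ∞`.
For an arbitrary `t`, this is applied at `⌊t 2^k⌋/2^k → t`, and continuity of both paths passes the
bound to the limit.
-/

open Filter Topology

/-- **Identification of a solution with the flow.** Let `φ_{s,t}` be a flow of maps of `ℝ^d` and
`Y` a continuous path with `Y 0 = x` such that, for all levels `k ≥ K`: (i) on consecutive
dyadic points `u = i/2^k`, `r = (i+1)/2^k` of `[0,T]` one has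
`|Y r - φ_{u,r}(Y u)| ≤ C₁ 2^(-k(1+γ))` and this quantity is `≤ 2^(-k)`; and (ii) `φ_{r,t}` is
`(C₂, α)`-Hölder on pairs at distance `≤ 2^(-k)` for every dyadic `r = (i+1)/2^k ∈ [0,T]` and
every `t ∈ [r,T]`. If `α(1+γ) > 1`, then `Y t = φ_{0,t}(x)` for all `t ∈ [0,T]`. -/
theorem solution_eq_flow
    (d : ℕ) (T : ℝ) (hT : 0 < T) (x : EuclideanSpace ℝ (Fin d))
    (α γ C₁ C₂ : ℝ) (hα : α ∈ Set.Ioo (0 : ℝ) 1) (hγ : 0 < γ)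
    (hαγ : 1 < α * (1 + γ)) (hC₁ : 0 ≤ C₁) (hC₂ : 0 ≤ C₂)
    (φ : ℝ → ℝ → EuclideanSpace ℝ (Fin d) → EuclideanSpace ℝ (Fin d))
    (hflow : ∀ s u t : ℝ, 0 ≤ s → s ≤ u → u ≤ t → t ≤ T →
      ∀ z, φ s t z = φ u t (φ s u z))
    (hid : ∀ s ∈ Set.Icc (0 : ℝ) T, ∀ z, φ s s z = z)
    (hφcont : ContinuousOn (fun t => φ 0 t x) (Set.Icc 0 T))
    (Y : ℝ → EuclideanSpace ℝ (Fin d))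
    (hYc : ContinuousOn Y (Set.Icc 0 T)) (hY0 : Y 0 = x)
    (K : ℕ)
    (hstep : ∀ k : ℕ, K ≤ k → ∀ i : ℕ, ((i : ℝ) + 1) / 2 ^ k ≤ T →
      ‖Y (((i : ℝ) + 1) / 2 ^ k) -
          φ ((i : ℝ) / 2 ^ k) (((i : ℝ) + 1) / 2 ^ k) (Y ((i : ℝ) / 2 ^ k))‖ ≤
        C₁ * 2 ^ (-(k : ℝ) * (1 + γ)) ∧
      ‖Y (((i : ℝ) + 1) / 2 ^ k) -
          φ ((i : ℝ) / 2 ^ k) (((i : ℝ) + 1) / 2 ^ k) (Y ((i : ℝ) / 2 ^ k))‖ ≤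
        2 ^ (-(k : ℝ)))
    (hholder : ∀ k : ℕ, K ≤ k → ∀ i : ℕ, ((i : ℝ) + 1) / 2 ^ k ≤ T →
      ∀ t ∈ Set.Icc (((i : ℝ) + 1) / 2 ^ k) T, ∀ z w : EuclideanSpace ℝ (Fin d),
        ‖z - w‖ ≤ 2 ^ (-(k : ℝ)) →
        ‖φ (((i : ℝ) + 1) / 2 ^ k) t z - φ (((i : ℝ) + 1) / 2 ^ k) t w‖ ≤
          C₂ * ‖z - w‖ ^ α) :
    ∀ t ∈ Set.Icc (0 : ℝ) T, Y t = φ 0 t x := by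
  have hα0 : 0 ≤ α := hα.1.le
  set q : ℝ := 2 ^ (1 - α * (1 + γ)) with hq
  have hq0 : 0 ≤ q := by positivity
  have hq1 : q < 1 := Real.rpow_lt_one_of_one_lt_of_neg (by norm_num) (by linarith)
  have hbound : ∀ k : ℕ, K ≤ k → ∀ n : ℕ, (n : ℝ) / 2 ^ k ≤ T →
      ‖φ 0 ((n : ℝ) / 2 ^ k) x - Y ((n : ℝ) / 2 ^ k)‖ ≤ T * C₂ * C₁ ^ α * q ^ k := by
    intro k hk n hn
    have h2 : (0 : ℝ) < 2 ^ k := by positivity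
    have htel := dist_le_range_sum_of_dist_le
      (f := fun i : ℕ => φ ((i : ℝ) / 2 ^ k) ((n : ℝ) / 2 ^ k) (Y ((i : ℝ) / 2 ^ k)))
      (d := fun _ => C₂ * (C₁ * 2 ^ (-(k : ℝ) * (1 + γ))) ^ α) n (by
        intro i hi
        have hin : ((i : ℝ) + 1) / 2 ^ k ≤ (n : ℝ) / 2 ^ k := by
          gcongr
          exact_mod_cast hi
        obtain ⟨h1, h3⟩ := hstep k hk i (hin.trans hn)
        have hsplit := hflow ((i : ℝ) / 2 ^ k) (((i : ℝ) + 1) / 2 ^ k) ((n : ℝ) / 2 ^ k)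
          (by positivity) (by gcongr; linarith) hin hn (Y ((i : ℝ) / 2 ^ k))
        have hh := hholder k hk i (hin.trans hn) ((n : ℝ) / 2 ^ k) ⟨hin, hn⟩ _ _ h3
        push_cast
        rw [hsplit, dist_comm, dist_eq_norm]
        exact hh.trans (by gcongr))
    have hpow : (2 : ℝ) ^ k * (C₁ * 2 ^ (-(k : ℝ) * (1 + γ))) ^ α = C₁ ^ α * q ^ k := by
      have e : (2 : ℝ) ^ k * (2 ^ (-(k : ℝ) * (1 + γ))) ^ α = q ^ k := by
        rw [hq, ← Real.rpow_natCast, ← Real.rpow_natCast, ← Real.rpow_mul (by norm_num),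
          ← Real.rpow_mul (by norm_num), ← Real.rpow_add (by norm_num)]
        congr 1
        ring
      rw [Real.mul_rpow hC₁ (by positivity), ← e]
      ring
    simp only [Nat.cast_zero, zero_div, hY0, Finset.sum_const, Finset.card_range,
      nsmul_eq_mul] at htel
    rw [hid _ ⟨by positivity, hn⟩, dist_eq_norm] at htel
    calc _ ≤ _ := htel
      _ ≤ (T * 2 ^ k) * (C₂ * (C₁ * 2 ^ (-(k : ℝ) * (1 + γ))) ^ α) := by
        gcongr
        exact (div_le_iff₀ h2).1 hn
      _ = T * C₂ * (2 ^ k * (C₁ * 2 ^ (-(k : ℝ) * (1 + γ))) ^ α) := by ring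
      _ = _ := by rw [hpow]; ring
  intro t ht
  have hfl : ∀ k : ℕ, (⌊t * 2 ^ k⌋₊ : ℝ) / 2 ^ k ≤ t := fun k =>
    (div_le_iff₀ (by positivity)).2 (Nat.floor_le (mul_nonneg ht.1 (by positivity)))
  have hlim : Tendsto (fun k : ℕ => (⌊t * 2 ^ k⌋₊ : ℝ) / 2 ^ k) atTop (𝓝[Set.Icc 0 T] t) := by
    refine tendsto_nhdsWithin_iff.2 ⟨?_, Eventually.of_forall fun k =>
      ⟨by positivity, (hfl k).trans ht.2⟩⟩
    exact (tendsto_nat_floor_mul_div_atTop ht.1).comp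
      (tendsto_pow_atTop_atTop_of_one_lt (one_lt_two : (1 : ℝ) < 2))
  have hleft := (((hφcont t ht).sub (hYc t ht)).norm).tendsto.comp hlim
  have hright : Tendsto (fun k : ℕ => T * C₂ * C₁ ^ α * q ^ k) atTop (𝓝 0) := by
    simpa using (tendsto_pow_atTop_nhds_zero_of_lt_one hq0 hq1).const_mul (T * C₂ * C₁ ^ α)
  have hle := le_of_tendsto_of_tendsto hleft hright
    ((eventually_ge_atTop K).mono fun k hk => hbound k hk _ ((hfl k).trans ht.2))
  exact (sub_eq_zero.1 (norm_le_zero_iff.1 hle)).symm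
end
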